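/- arXiv:1603.08605 — 2 statements merged into one kernel-verified Lean document; each statement's English description precedes it below -/
import Mathlib

section
/- (Measurable Choice Theorem) Let (T, 𝒯, μ) be a σ-finite measure space, let S be a standard Borel space, and let G be a measurable subset of T × S (with the product σ-algebra) whose projection onto T is all of T. Then there exists a measurable function g : T → S such that (t, g(t)) ∈ G for μ-almost every t ∈ T. -/
open MeasureTheory

open Set Filter Topology

lemma aux_factor {T S : Type*} [MeasurableSpace T] [MeasurableSpace S]
    (G : Set (T × S)) (hG : MeasurableSet G) :
    ∃ φ : T → (ℕ → Bool), Measurable φ ∧ ∃ G' : Set ((ℕ → Bool) × S), MeasurableSet G' ∧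
      G = (fun q : T × S => (φ q.1, q.2)) ⁻¹' G' := by
  classical
  have hG' := hG
  rw [← generateFrom_prod] at hG'
  induction G, hG' using MeasurableSpace.generateFrom_induction with
  | hC t ht _ =>
    obtain ⟨A, hA, B, hB, rfl⟩ := ht
    refine ⟨fun t _ => decide (t ∈ A), ?_, {q | q.1 0 = true ∧ q.2 ∈ B}, ?_, ?_⟩
    · refine measurable_pi_lambda _ fun _ => ?_
      refine measurable_to_bool ?_
      have : (fun t => decide (t ∈ A)) ⁻¹' {true} = A := by ext; simp
      rw [this]; exact hA
    · have h1 : Measurable (fun q : (ℕ → Bool) × S => q.1 0) :=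
        (measurable_pi_apply 0).comp measurable_fst
      exact (h1 (measurableSet_singleton true)).inter (measurable_snd hB)
    · ext q; simp [Set.mem_prod]
  | empty => exact ⟨fun _ _ => true, measurable_const, ∅, MeasurableSet.empty, by simp⟩
  | compl t ht ih =>
    have hm : MeasurableSet t := by rw [← generateFrom_prod]; exact ht
    obtain ⟨φ, hφ, G', hG', rfl⟩ := ih hm
    exact ⟨φ, hφ, G'ᶜ, hG'.compl, rfl⟩
  | iUnion s hs ih =>
    have hm : ∀ n, MeasurableSet (s n) := fun n => by rw [← generateFrom_prod]; exact hs n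
    choose φ hφ G' hG' h using fun n => ih n (hm n)
    refine ⟨fun t k => φ k.unpair.1 t k.unpair.2, ?_,
      ⋃ n, (fun q : (ℕ → Bool) × S => ((fun m => q.1 (Nat.pair n m)), q.2)) ⁻¹' G' n, ?_, ?_⟩
    · exact measurable_pi_lambda _ fun k => (measurable_pi_apply _).comp (hφ _)
    · refine MeasurableSet.iUnion fun n => ?_
      refine Measurable.prodMk ?_ measurable_snd (hG' n)
      exact measurable_pi_lambda _ fun m => (measurable_pi_apply _).comp measurable_fst
    · ext q
      simp only [mem_iUnion, mem_preimage, Nat.unpair_pair]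
      refine exists_congr fun n => ?_
      conv_lhs => rw [h n]
      rfl

/-- Capacitability. -/
lemma aux_cap {X Z : Type*} [TopologicalSpace X] [PolishSpace X] [MeasurableSpace X] [BorelSpace X]
    [TopologicalSpace Z]
    (ν : Measure X) [IsFiniteMeasure ν] (G : Set Z) (hG : AnalyticSet G) (π : Z → X)
    (hπ : Continuous π) (c : ENNReal) (hc : c < ν (π '' G)) :
    ∃ K ⊆ G, IsCompact K ∧ c ≤ ν (π '' K) := by
  rw [AnalyticSet] at hG
  rcases hG with rfl | ⟨f, hf, rfl⟩
  · simp at hc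
  set p : (ℕ → ℕ) → X := π ∘ f with hp
  have hpc : Continuous p := hπ.comp hf
  have step : ∀ (n : ℕ) (s : {s : Set (ℕ → ℕ) // c < ν (p '' s)}),
      ∃ j : ℕ, c < ν (p '' (s.1 ∩ {x | x n ≤ j})) := by
    rintro n ⟨s, hs⟩
    have h1 : p '' s = ⋃ j : ℕ, p '' (s ∩ {x | x n ≤ j}) := by
      rw [← image_iUnion, ← inter_iUnion]
      congr 1
      ext x
      simp only [mem_inter_iff, mem_iUnion, mem_ofPred_eq]
      exact ⟨fun h => ⟨h, x n, le_rfl⟩, fun h => h.1⟩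
    have hmono : Monotone fun j : ℕ => p '' (s ∩ {x | x n ≤ j}) := by
      intro i j hij
      refine image_mono (inter_subset_inter_right _ ?_)
      intro x hx
      exact le_trans hx hij
    rw [h1, hmono.measure_iUnion] at hs
    exact lt_iSup_iff.1 hs
  choose j hj using step
  have hu : c < ν (p '' univ) := by
    rw [image_univ, hp, range_comp]; exact hc
  let F : ℕ → {s : Set (ℕ → ℕ) // c < ν (p '' s)} := fun n =>
    Nat.rec ⟨univ, hu⟩ (fun n s => ⟨s.1 ∩ {x | x n ≤ j n s}, hj n s⟩) n
  let b : ℕ → ℕ := fun n => j n (F n)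
  have hF : ∀ n, (F n).1 = {x | ∀ i < n, x i ≤ b i} := by
    intro n
    induction n with
    | zero => ext; simp [F]
    | succ n ih =>
      have : (F (n+1)).1 = (F n).1 ∩ {x | x n ≤ b n} := rfl
      rw [this, ih]
      ext x
      simp only [mem_inter_iff, mem_ofPred_eq, Nat.lt_succ_iff_lt_or_eq]
      constructor
      · rintro ⟨h1, h2⟩ i (hi | rfl)
        · exact h1 i hi
        · exact h2
      · intro h
        exact ⟨fun i hi => h i (Or.inl hi), h n (Or.inr rfl)⟩
  let K : Set (ℕ → ℕ) := Set.pi univ fun i => Iic (b i)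
  have hK : IsCompact K := isCompact_univ_pi fun i => (finite_Iic (b i)).isCompact
  have key : ∀ V : Set (ℕ → ℕ), IsOpen V → K ⊆ V → ∃ n, (F n).1 ⊆ V := by
    intro V hV hKV
    by_contra! hcon
    have hcon' : ∀ n, ∃ y, y ∈ (F n).1 ∧ y ∉ V := fun n => not_subset.1 (hcon n)
    choose y hy hyV using hcon'
    obtain ⟨k, hk, ψ, hψ, hlim⟩ := hK.tendsto_subseq
      (x := fun n i => min (y n i) (b i)) (fun n i _ => mem_Iic.2 (min_le_right _ _))
    have hlim2 : Tendsto (y ∘ ψ) atTop (𝓝 k) := by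
      rw [tendsto_pi_nhds] at hlim ⊢
      intro i
      refine (hlim i).congr' ?_
      filter_upwards [eventually_gt_atTop i] with n hn
      have h1 := hy (ψ n)
      rw [hF] at h1
      exact min_eq_left (h1 i (hn.trans_le (hψ.id_le n)))
    obtain ⟨n, hn⟩ := (hlim2.eventually (hV.mem_nhds (hKV hk))).exists
    exact hyV _ hn
  refine ⟨f '' K, image_subset_range _ _, hK.image hf, ?_⟩
  rw [← image_comp, (p '' K).measure_eq_iInf_isOpen ν]
  refine le_iInf₂ fun U hU => le_iInf fun hUo => ?_
  obtain ⟨n, hn⟩ := key (p ⁻¹' U) (hUo.preimage hpc) (image_subset_iff.1 hU)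
  exact (F n).2.le.trans (measure_mono (image_subset_iff.2 hn))

lemma aux_compact {X : Type*} [TopologicalSpace X] [T2Space X] [MeasurableSpace X] [BorelSpace X]
    (C : Set (X × ℝ)) (hC : IsCompact C) :
    ∃ h : X → ℝ, Measurable h ∧ ∀ x ∈ Prod.fst '' C, (x, h x) ∈ C := by
  have hcl : ∀ x : X, IsCompact {s : ℝ | (x, s) ∈ C} := by
    intro x
    have : {s : ℝ | (x, s) ∈ C} = Prod.snd '' (C ∩ Prod.fst ⁻¹' {x}) := by
      ext s
      constructor
      · intro h; exact ⟨(x, s), ⟨h, rfl⟩, rfl⟩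
      · rintro ⟨⟨a, r⟩, ⟨h, h1⟩, rfl⟩
        simp only [mem_preimage, mem_singleton_iff] at h1
        subst h1; exact h
    rw [this]
    exact (hC.inter_right (isClosed_singleton.preimage continuous_fst)).image continuous_snd
  have hmem : ∀ x ∈ Prod.fst '' C, (x, sInf {s : ℝ | (x, s) ∈ C}) ∈ C := by
    rintro x ⟨⟨a, r⟩, h, rfl⟩
    exact (hcl a).sInf_mem ⟨r, h⟩
  refine ⟨fun x => sInf {s : ℝ | (x, s) ∈ C}, ?_, hmem⟩
  refine measurable_of_Iic fun c => ?_
  have : (fun x => sInf {s : ℝ | (x, s) ∈ C}) ⁻¹' Iic c =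
      Prod.fst '' (C ∩ Prod.snd ⁻¹' Iic c) ∪ ((Prod.fst '' C)ᶜ ∩ {_x | 0 ≤ c}) := by
    ext x
    by_cases hx : x ∈ Prod.fst '' C
    · simp only [mem_union, mem_inter_iff, mem_compl_iff, hx, not_true, false_and, or_false]
      constructor
      · intro h
        exact ⟨_, ⟨hmem x hx, h⟩, rfl⟩
      · rintro ⟨⟨a, r⟩, ⟨h, h1⟩, rfl⟩
        exact (csInf_le (hcl a).bddBelow h).trans h1
    · have he : {s : ℝ | (x, s) ∈ C} = ∅ := by
        ext s
        simp only [mem_ofPred_eq, mem_empty_iff_false, iff_false]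
        exact fun h => hx ⟨_, h, rfl⟩
      have hx2 : x ∉ Prod.fst '' (C ∩ Prod.snd ⁻¹' Iic c) :=
        fun h => hx (image_mono inter_subset_left h)
      simp only [mem_preimage, he, Real.sInf_empty, mem_Iic, mem_union, hx2, false_or,
        mem_inter_iff, mem_compl_iff, hx, not_false_iff, true_and, mem_ofPred_eq]
  rw [this]
  refine MeasurableSet.union ?_ (MeasurableSet.inter ?_ (MeasurableSet.const _))
  · exact ((hC.inter_right (isClosed_Iic.preimage continuous_snd)).image
      continuous_fst).measurableSet
  · exact (hC.image continuous_fst).measurableSet.compl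

lemma aux_core {X : Type*} [TopologicalSpace X] [PolishSpace X] [MeasurableSpace X] [BorelSpace X]
    (ν : Measure X) [IsFiniteMeasure ν] (G : Set (X × ℝ)) (hG : AnalyticSet G) :
    ∃ g : X → ℝ, Measurable g ∧ ∀ᵐ x ∂ν, x ∈ Prod.fst '' G → (x, g x) ∈ G := by
  by_cases h0 : ν (Prod.fst '' G) = 0
  · refine ⟨fun _ => 0, measurable_const, ?_⟩
    filter_upwards [measure_eq_zero_iff_ae_notMem.1 h0] with x hx hx'
    exact absurd hx' hx
  obtain ⟨c, -, hc, hlim⟩ := exists_seq_strictMono_tendsto' (pos_iff_ne_zero.2 h0)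
  choose K hKG hK hcK using fun n => aux_cap ν G hG Prod.fst continuous_fst (c n) (hc n).2
  choose h hh hhK using fun n => aux_compact (K n) (hK n)
  have hQ : ∀ n, MeasurableSet (Prod.fst '' K n) :=
    fun n => ((hK n).image continuous_fst).measurableSet
  obtain ⟨g, hg, hgeq⟩ := exists_measurable_piecewise (disjointed fun n => Prod.fst '' K n)
    (fun n => MeasurableSet.disjointed hQ n) h hh (by
      intro i j hij x hx
      exact absurd hx.2 (disjoint_left.1 (disjoint_disjointed _ hij) hx.1))
  refine ⟨g, hg, ?_⟩
  set Q := ⋃ n, Prod.fst '' K n with hQdef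
  have hQm : MeasurableSet Q := MeasurableSet.iUnion hQ
  have hnull : ν (Prod.fst '' G \ Q) = 0 := by
    have hsub : Q ⊆ Prod.fst '' G := iUnion_subset fun n => image_mono (hKG n)
    have h1 := measure_inter_add_sdiff (μ := ν) (Prod.fst '' G) hQm
    rw [inter_eq_right.2 hsub] at h1
    have h2 : ν (Prod.fst '' G) ≤ ν Q :=
      le_of_tendsto' hlim fun n => (hcK n).trans (measure_mono (subset_iUnion (fun n => Prod.fst '' K n) n))
    by_contra hne
    have := ENNReal.lt_add_right (measure_ne_top ν Q) hne
    rw [h1] at this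
    exact absurd this (not_lt.2 h2)
  filter_upwards [measure_eq_zero_iff_ae_notMem.1 hnull] with x hx hxG
  have hxQ : x ∈ Q := by by_contra hq; exact hx ⟨hxG, hq⟩
  rw [hQdef, ← iUnion_disjointed] at hxQ
  obtain ⟨n, hn⟩ := mem_iUnion.1 hxQ
  rw [hgeq n hn]
  exact hKG n (hhK n x (disjointed_subset _ n hn))

/-- Measurable Choice Theorem (Aumann): if `G ⊆ T × S` is measurable, `S` is a
standard Borel space, `(T, μ)` is σ-finite, and the projection of `G` to `T` is
all of `T`, then there is a measurable selection `g : T → S` with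
`(t, g t) ∈ G` for `μ`-almost every `t`. -/
theorem stmt2
    {T : Type*} [MeasurableSpace T] (μ : Measure T) [SigmaFinite μ]
    {S : Type*} [MeasurableSpace S] [StandardBorelSpace S]
    (G : Set (T × S)) (hG : MeasurableSet G)
    (hproj : ∀ t : T, ∃ s : S, (t, s) ∈ G) :
    ∃ g : T → S, Measurable g ∧ ∀ᵐ t ∂μ, (t, g t) ∈ G := by
  rcases isEmpty_or_nonempty T with hT | ⟨⟨t₀⟩⟩
  · exact ⟨fun t => (hT.false t).elim, measurable_of_empty _, ae_of_all _ fun t => (hT.false t).elim⟩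
  obtain ⟨s₀, -⟩ := hproj t₀
  obtain ⟨φ, hφ, G₁, hG₁, rfl⟩ := aux_factor G hG
  have he := measurableEmbedding_embeddingReal S
  set e := embeddingReal S
  obtain ⟨r, hr, hre⟩ := he.exists_measurable_extend measurable_id (fun _ => ⟨s₀⟩)
  have hE : MeasurableEmbedding (Prod.map id e : (ℕ → Bool) × S → (ℕ → Bool) × ℝ) :=
    MeasurableEmbedding.id.prodMap he
  have hG₂ : MeasurableSet (Prod.map id e '' G₁) := hE.measurableSet_image.2 hG₁
  have hB : PolishSpace Bool := inferInstance
  have hB2 : PolishSpace (ℕ → Bool) := inferInstance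
  obtain ⟨g, hg, hae⟩ := aux_core (μ.toFinite.map φ) _ hG₂.analyticSet
  refine ⟨fun t => r (g (φ t)), hr.comp (hg.comp hφ), ?_⟩
  have hae2 := ae_of_ae_map hφ.aemeasurable hae
  rw [ae_toFinite] at hae2
  filter_upwards [hae2] with t ht
  obtain ⟨s, hs⟩ := hproj t
  obtain ⟨⟨x, s'⟩, hx, hxe⟩ := ht ⟨_, ⟨_, hs, rfl⟩, rfl⟩
  simp only [Prod.map_apply, id_eq, Prod.mk.injEq] at hxe
  obtain ⟨rfl, h2⟩ := hxe
  have : r (e s') = s' := congrFun hre s'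
  simp only [mem_preimage, ← h2, this]
  exact hx
end

section
/- Let A : ℝ^d → ℝ^d be a linear automorphism such that for every nonzero v ∈ ℝ^d the set {‖A^n v‖ : n ∈ ℤ} is unbounded. Let f : ℝ^d → ℝ^d be a bijection and h : ℝ^d → ℝ^d a map with A ∘ h = h ∘ f and sup_{x∈ℝ^d} ‖h(x) − x‖ ≤ K < ∞. Then for every constant Ω ≥ 2K and every x ∈ ℝ^d, the fiber of h through x equals the intersection of pulled-back balls along the orbit: h⁻¹({h(x)}) = ⋂_{n∈ℤ} f^{−n}( B̄(f^n(x), Ω) ), where B̄(c, Ω) denotes the closed ball of radius Ω centered at c. In particular, h is injective at x (the fiber h⁻¹({h(x)}) is the singleton {x}) if and only if {x} = ⋂_{n∈ℤ} f^{−n}( B̄(f^n(x), Ω) ). -/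
/-- Characterization of the fibers of the semi-conjugacy: under the same
hypotheses as the previous statement, for every `Ω ≥ 2K` the fiber of `h`
through `x` is the intersection over `n ∈ ℤ` of the preimages under `f^n` of
the closed balls of radius `Ω` around the orbit points `f^n x`; in particular
`h` is injective at `x` iff this intersection is the singleton `{x}`. -/
theorem stmt7 {d : ℕ}
    (A : EuclideanSpace ℝ (Fin d) ≃ₗ[ℝ] EuclideanSpace ℝ (Fin d))
    (hAhyp : ∀ v : EuclideanSpace ℝ (Fin d), v ≠ 0 →
      ¬ BddAbove (Set.range fun n : ℤ => ‖(A ^ n) v‖))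
    (f : Equiv.Perm (EuclideanSpace ℝ (Fin d)))
    (h : EuclideanSpace ℝ (Fin d) → EuclideanSpace ℝ (Fin d))
    (hsemi : ∀ x, A (h x) = h (f x))
    (K : ℝ) (hK : ∀ x, ‖h x - x‖ ≤ K)
    (Ω : ℝ) (hΩ : 2 * K ≤ Ω) :
    ∀ x : EuclideanSpace ℝ (Fin d),
      (h ⁻¹' {h x} = ⋂ n : ℤ, (f ^ n) ⁻¹' (Metric.closedBall ((f ^ n) x) Ω)) ∧
      ((h ⁻¹' {h x} = {x}) ↔
        ({x} : Set (EuclideanSpace ℝ (Fin d))) =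
          ⋂ n : ℤ, (f ^ n) ⁻¹' (Metric.closedBall ((f ^ n) x) Ω)) := by
  have key : ∀ (n : ℤ) x, (A ^ n) (h x) = h ((f ^ n) x) := by
    intro n
    induction n with
    | zero => intro x; simp
    | succ n ih =>
      intro x
      rw [zpow_add_one, zpow_add_one, LinearEquiv.mul_apply, Equiv.Perm.mul_apply, hsemi, ih]
    | pred n ih =>
      intro x
      have e : A⁻¹ (h x) = h (f⁻¹ x) := by
        apply A.injective
        rw [hsemi, ← Equiv.Perm.mul_apply, mul_inv_cancel, ← LinearEquiv.mul_apply, mul_inv_cancel]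
        rfl
      rw [zpow_sub_one, zpow_sub_one, LinearEquiv.mul_apply, Equiv.Perm.mul_apply, e, ih]
  intro x
  have main : h ⁻¹' {h x} = ⋂ n : ℤ, (f ^ n) ⁻¹' (Metric.closedBall ((f ^ n) x) Ω) := by
    ext y
    simp only [Set.mem_preimage, Set.mem_singleton_iff, Set.mem_iInter, Metric.mem_closedBall,
      dist_eq_norm]
    constructor
    · intro hy n
      have e : h ((f ^ n) y) = h ((f ^ n) x) := by rw [← key, ← key, hy]
      have e2 : (f ^ n) y - (f ^ n) x
          = (h ((f ^ n) x) - (f ^ n) x) - (h ((f ^ n) y) - (f ^ n) y) := by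
        rw [e]; abel
      rw [e2]
      have := norm_sub_le (h ((f ^ n) x) - (f ^ n) x) (h ((f ^ n) y) - (f ^ n) y)
      linarith [hK ((f ^ n) x), hK ((f ^ n) y)]
    · intro hy
      by_contra hne
      apply hAhyp (h y - h x) (sub_ne_zero.mpr hne)
      refine ⟨K + Ω + K, ?_⟩
      rintro _ ⟨n, rfl⟩
      have e2 : (A ^ n) (h y - h x) = (h ((f ^ n) y) - (f ^ n) y) + ((f ^ n) y - (f ^ n) x)
          - (h ((f ^ n) x) - (f ^ n) x) := by
        rw [map_sub, key, key]; abel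
      simp only [e2]
      have h1 := norm_sub_le ((h ((f ^ n) y) - (f ^ n) y) + ((f ^ n) y - (f ^ n) x))
        (h ((f ^ n) x) - (f ^ n) x)
      have h2 := norm_add_le (h ((f ^ n) y) - (f ^ n) y) ((f ^ n) y - (f ^ n) x)
      linarith [hK ((f ^ n) x), hK ((f ^ n) y), hy n]
  refine ⟨main, ?_⟩
  rw [← main]
  exact eq_comm
end
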